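/- Let n, r ∈ ℕ with r ≥ 3 and r dividing n, and let D ∈ ℕ with r−1 ≤ D ≤ (r−1)n/r − 1. Define g(n,r,D) := max{ C(n,2) − C(n/r+1, 2), D(n−D) + C(n−1−D, 2) + e(T(D, r−2)) }. Then every graph G on n vertices with minimum degree δ(G) ≥ D and e(G) > g(n,r,D) contains a perfect K_r-packing. Moreover, there exists a graph G' on n vertices with δ(G') ≥ D and e(G') = g(n,r,D) that contains no perfect K_r-packing. -/

import Mathlib

/-- The number of edges of a graph. -/
noncomputable def edgeCount {V : Type*} (G : SimpleGraph V) : ℕ := Nat.card G.edgeSet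

/-- The degree of a vertex. -/
noncomputable def deg {V : Type*} (G : SimpleGraph V) (v : V) : ℕ := Nat.card (G.neighborSet v)

/-- A perfect `K_r`-packing: a collection of vertex-disjoint `r`-cliques covering all vertices. -/
def HasPerfectKrPacking {n : ℕ} (G : SimpleGraph (Fin n)) (r : ℕ) : Prop :=
  ∃ P : Finset (Finset (Fin n)),
    (∀ p ∈ P, p.card = r ∧ G.IsClique (p : Set (Fin n))) ∧
    (P : Set (Finset (Fin n))).PairwiseDisjoint id ∧
    P.biUnion id = Finset.univ

/-- `g(n,r,D)` where `e(T(D, r-2))` is the number of edges of the Turán graph. -/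
noncomputable def gFun (n r D : ℕ) : ℕ :=
  max (Nat.choose n 2 - Nat.choose (n / r + 1) 2)
    (D * (n - D) + Nat.choose (n - 1 - D) 2 + edgeCount (SimpleGraph.turanGraph D (r - 2)))

/-!
Work in the complement `H` of `G`, where `n = (k + 2) * m` and cliques become independent sets. The
two edge bounds say that `H` has fewer than `C(m + 1, 2)` edges, and fewer edges than any star
together with the non-edges of a `k`-partite Turán graph on the vertices outside that star. Apply
Turán's theorem to the non-neighbours of a vertex `x₀` of largest degree: by the second bound `x₀`
lies in an independent set of size `k + 2`. Remove one of largest possible degree sum. A vertex left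
over with no neighbour in this set could replace any of its members other than `x₀`, so its degree
is at most theirs; this is what makes both bounds survive the removal, with `m` lowered by one.
Iterating partitions the vertices into independent sets of size `k + 2`.

The extremal graphs are the complements of `K_{m+1}` with isolated vertices added, which contains
too large an independent set of `G`, and of the disjoint union of a star with the complement of
`T(D, k)`, where the centre of the star lies in no `K_{k+2}` of `G`.
-/

section TuranDeficit

open Finset

/-- The number of non-edges of the Turán graph `T(D, k)`: the vertex `i` of `T(D, k)` is
non-adjacent to exactly `i / k` of the vertices preceding it. -/
def turanDeficit (k D : ℕ) : ℕ := ∑ i ∈ range D, i / k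

variable {k : ℕ}

lemma turanDeficit_succ (k D : ℕ) : turanDeficit k (D + 1) = turanDeficit k D + D / k :=
  sum_range_succ _ _

lemma turanDeficit_mono (k : ℕ) : Monotone (turanDeficit k) := fun _ _ h =>
  sum_le_sum_of_subset (range_mono h)

lemma turanDeficit_eq_zero_of_le {D : ℕ} (h : D ≤ k) : turanDeficit k D = 0 :=
  sum_eq_zero fun _ hi => Nat.div_eq_of_lt ((mem_range.1 hi).trans_le h)

lemma turanDeficit_add_self (hk : 0 < k) (D : ℕ) :
    turanDeficit k (D + k) = turanDeficit k D + D := by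
  have hshift (i : ℕ) : (k + i) / k = i / k + 1 := Nat.add_div_left i hk
  have hhead : ∑ i ∈ range k, i / k = 0 := turanDeficit_eq_zero_of_le le_rfl
  rw [add_comm, turanDeficit, sum_range_add, hhead, zero_add]
  simp only [hshift, sum_add_distrib, sum_const, card_range, smul_eq_mul, mul_one, turanDeficit]

lemma turanDeficit_add_self_succ (hk : 0 < k) (D : ℕ) :
    turanDeficit k (D + k + 1) = turanDeficit k D + D + D / k + 1 := by
  rw [turanDeficit_succ, turanDeficit_add_self hk, Nat.add_div_right D hk]
  omega

lemma turanDeficit_add_self_add_two_le (hk : 0 < k) (D : ℕ) :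
    turanDeficit k (D + k + 2) ≤ turanDeficit k D + D + 2 * (D / k) + 3 := by
  have hdiv : (D + k + 1) / k ≤ D / k + 2 := by
    calc (D + k + 1) / k ≤ (D + k + k) / k := Nat.div_le_div_right (by omega)
      _ = D / k + 2 := by rw [Nat.add_div_right _ hk, Nat.add_div_right _ hk]
  rw [turanDeficit_succ, turanDeficit_add_self_succ hk]
  omega

lemma turanDeficit_add_le_turanDeficit_add (hk : 0 < k) {D : ℕ} (hD : k ≤ D) (j : ℕ) :
    turanDeficit k D + j ≤ turanDeficit k (D + j) := by
  induction j with
  | zero => rfl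
  | succ j ih =>
    have hpos : 0 < (D + j) / k := Nat.div_pos (by omega) hk
    rw [← add_assoc D, turanDeficit_succ]
    omega

/-- The tangent of slope `p` to the convex function `turanDeficit k`. -/
lemma mul_le_turanDeficit_add_mul_choose_two (hk : 0 < k) (p D : ℕ) :
    p * D ≤ turanDeficit k D + k * (p + 1).choose 2 := by
  induction p generalizing D with
  | zero => simp
  | succ p ih =>
    have hchoose : (p + 2).choose 2 = (p + 1) + (p + 1).choose 2 := by
      rw [Nat.choose_succ_succ' (p + 1) 1, Nat.choose_one_right]
    rw [hchoose]
    rcases lt_or_ge D k with hDk | hkD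
    · nlinarith [Nat.zero_le (turanDeficit k D), Nat.zero_le (k * (p + 1).choose 2)]
    · obtain ⟨D, rfl⟩ := Nat.exists_eq_add_of_le' hkD
      rw [turanDeficit_add_self hk]
      nlinarith [ih D]

lemma sq_le_two_mul_turanDeficit_add (hk : 0 < k) (D : ℕ) :
    D ^ 2 ≤ 2 * k * turanDeficit k D + k * D := by
  induction D using Nat.strong_induction_on with
  | h D ih =>
    rcases lt_or_ge D k with hDk | hkD
    · nlinarith [Nat.zero_le (k * turanDeficit k D)]
    · obtain ⟨D, rfl⟩ := Nat.exists_eq_add_of_le' hkD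
      rw [turanDeficit_add_self hk]
      nlinarith [ih D (by omega)]

lemma two_mul_choose_two_succ (a : ℕ) : 2 * (a + 1).choose 2 = (a + 1) * a := by
  rw [mul_comm, Nat.choose_two_right, Nat.add_sub_cancel,
    Nat.div_mul_cancel (even_iff_two_dvd.1 (mul_comm a _ ▸ Nat.even_mul_succ_self a))]

lemma choose_two_le_turanDeficit (hk : 0 < k) {D M : ℕ} (h : (k + 1) * (M + 1) ≤ 2 * D) :
    (M + 1).choose 2 ≤ turanDeficit k D := by
  have htangent := mul_le_turanDeficit_add_mul_choose_two hk M D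
  have hchoose := two_mul_choose_two_succ M
  nlinarith [Nat.mul_le_mul_left M h]

/-- The quadratic is `2 * k` times the gap in `choose_two_le_two_mul_add_turanDeficit`, once `d` is
eliminated and `turanDeficit k D` is replaced by its lower bound `(D ^ 2 - k * D) / (2 * k)`. -/
lemma quadratic_gap_nonneg {k M D : ℤ} (hk : 1 ≤ k) (hM : 1 ≤ M)
    (hlow : k * ((k + 2) * M - 1) ≤ (2 * k + 1) * D) (hup : D ≤ (k + 1) * M - 1) :
    0 ≤ k * (M - 1) * ((k - 1) * M + 4) + (D - k * M) * (D + k * M - 5 * k) := by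
  have hkM : 0 ≤ k * (M - 1) := by nlinarith
  have hkM' : 0 ≤ (k - 1) * M := by nlinarith
  rcases le_total (k * M) D with hD | hD
  · rcases le_total (5 * k) (D + k * M) with h5 | h5
    · nlinarith [mul_nonneg (sub_nonneg.2 hD) (sub_nonneg.2 h5), mul_nonneg hkM hkM']
    · have hgap : 5 * k - (D + k * M) ≤ 3 * k := by nlinarith
      have hprod : (D - k * M) * (5 * k - (D + k * M)) ≤ (M - 1) * (3 * k) :=
        mul_le_mul (by linarith) hgap (by linarith) (by linarith)
      nlinarith [mul_nonneg hkM hkM']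
  · rcases le_total (D + k * M) (5 * k) with h5 | h5
    · nlinarith [mul_nonneg (sub_nonneg.2 hD) (sub_nonneg.2 h5), mul_nonneg hkM hkM']
    · have hgap : 2 * (k * M - D) ≤ (k - 1) * M + 1 := by
        have : k * (2 * (k * M - D)) ≤ k * ((k - 1) * M + 1) := by nlinarith
        exact le_of_mul_le_mul_left this (by linarith)
      have hprod : (k * M - D) * (D + k * M - 5 * k) ≤ (k * M - D) * (2 * (k * (M - 1))) :=
        mul_le_mul_of_nonneg_left (by linarith) (by linarith)
      nlinarith [mul_le_mul_of_nonneg_left hgap hkM]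

lemma choose_two_le_two_mul_add_turanDeficit (hk : 0 < k) {M d D : ℕ}
    (hD : D + d + 1 = (k + 2) * M) (hMd : M ≤ d) (hd : d ≤ D + D / k) :
    (M + 2).choose 2 ≤ 2 * d + 1 + turanDeficit k D := by
  have hM : 1 ≤ M := by
    rcases Nat.eq_zero_or_pos M with rfl | hM
    · omega
    · exact hM
  have hkd : k * d ≤ k * D + D := by
    calc k * d ≤ k * (D + D / k) := Nat.mul_le_mul_left k hd
      _ = k * D + k * (D / k) := mul_add ..
      _ ≤ k * D + D := Nat.add_le_add_left (Nat.mul_div_le D k) _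
  have hchoose := two_mul_choose_two_succ (M + 1)
  have hsq := sq_le_two_mul_turanDeficit_add hk D
  zify at *
  have hd_eq : (d : ℤ) = (k + 2) * M - 1 - D := by linarith
  rw [hd_eq] at hMd hkd ⊢
  have hquad := quadratic_gap_nonneg (k := k) (M := M) (D := D) (by linarith) hM
    (by linarith) (by linarith)
  refine le_of_mul_le_mul_left ?_ (show (0 : ℤ) < 2 * k by linarith)
  calc (2 * k : ℤ) * (M + 2).choose 2 = k * ((M + 2) * (M + 1)) := by
        linear_combination (k : ℤ) * hchoose
    _ ≤ 2 * k * (2 * ((k + 2) * M - 1 - D) + 1 + turanDeficit k D) := by linarith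

lemma choose_two_le_add_of_lt_add_turanDeficit (hk : 0 < k) {M d₀ d₁ D₁ s e₁ : ℕ}
    (hD : D₁ + d₁ + 1 = (k + 2) * M) (hMd : M ≤ d₁) (hs : d₀ ≤ s)
    (hd : d₁ < d₀ ∨ d₁ ≤ d₀ ∧ d₀ + 2 * d₁ ≤ s)
    (hlt : e₁ + s < d₀ + turanDeficit k ((k + 2) * (M + 1) - 1 - d₀))
    (hle : d₁ + turanDeficit k D₁ ≤ e₁) : (M + 2).choose 2 ≤ e₁ + s := by
  have hM : 0 < M := Nat.pos_of_ne_zero (by rintro rfl; omega)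
  have hmul : (k + 2) * (M + 1) = (k + 2) * M + k + 2 := by ring
  have hdle : d₁ ≤ D₁ + D₁ / k := by
    rcases hd with hd | ⟨hd, hsum⟩
    · have hmono := turanDeficit_mono k (show (k + 2) * (M + 1) - 1 - d₀ ≤ D₁ + k + 1 by omega)
      have hshift := turanDeficit_add_self_succ hk D₁
      omega
    · have hmono := turanDeficit_mono k (show (k + 2) * (M + 1) - 1 - d₀ ≤ D₁ + k + 2 by omega)
      have hshift := turanDeficit_add_self_add_two_le hk D₁
      omega
  have hkey := choose_two_le_two_mul_add_turanDeficit hk hD hMd hdle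
  omega

end TuranDeficit

section EdgeCount

open Finset SimpleGraph

lemma add_choose_two (a b : ℕ) : (a + b).choose 2 = a.choose 2 + a * b + b.choose 2 := by
  simp only [Nat.add_choose_eq, Nat.sum_antidiagonal_eq_sum_range_succ_mk, sum_range_succ,
    range_one, sum_singleton, Nat.choose_zero_right, Nat.choose_one_right, Nat.sub_zero,
    Nat.add_one_sub_one, Nat.sub_self, one_mul, mul_one]
  ring

variable {V W : Type*} {G : SimpleGraph V} {H : SimpleGraph W}

lemma edgeCount_eq_card_edgeFinset (G : SimpleGraph V) [Fintype G.edgeSet] :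
    edgeCount G = #G.edgeFinset :=
  Nat.card_eq_fintype_card.trans edgeFinset_card.symm

lemma deg_eq_degree (G : SimpleGraph V) (v : V) [Fintype (G.neighborSet v)] :
    deg G v = G.degree v :=
  Nat.card_eq_fintype_card.trans (G.card_neighborSet_eq_degree v)

lemma edgeCount_congr (e : G ≃g H) : edgeCount G = edgeCount H :=
  Nat.card_congr e.mapEdgeSet

lemma deg_congr (e : G ≃g H) (v : V) : deg G v = deg H (e v) :=
  Nat.card_congr (e.mapNeighborSet v)

lemma edgeCount_bot : edgeCount (⊥ : SimpleGraph V) = 0 := by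
  rw [edgeCount, edgeSet_bot, Nat.card_coe_set_eq, Set.ncard_empty]

lemma deg_bot (v : V) : deg (⊥ : SimpleGraph V) v = 0 := by
  rw [deg, neighborSet_bot, Nat.card_coe_set_eq, Set.ncard_empty]

lemma edgeCount_sum [Finite V] [Finite W] (G : SimpleGraph V) (H : SimpleGraph W) :
    edgeCount (G ⊕g H) = edgeCount G + edgeCount H :=
  (Nat.card_congr edgeSetSumEquiv).trans Nat.card_sum

lemma deg_sum_inl (G : SimpleGraph V) (H : SimpleGraph W) (v : V) :
    deg (G ⊕g H) (.inl v) = deg G v := by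
  rw [deg, neighborSet_sum_inl, Nat.card_image_of_injective Sum.inl_injective, deg]

lemma deg_sum_inr (G : SimpleGraph V) (H : SimpleGraph W) (w : W) :
    deg (G ⊕g H) (.inr w) = deg H w := by
  rw [deg, neighborSet_sum_inr, Nat.card_image_of_injective Sum.inr_injective, deg]

variable [Fintype V]

lemma two_mul_edgeCount (G : SimpleGraph V) : 2 * edgeCount G = ∑ v, deg G v := by
  classical
  simp only [edgeCount_eq_card_edgeFinset, deg_eq_degree, sum_degrees_eq_twice_card_edges]

lemma deg_add_deg_compl_add_one (G : SimpleGraph V) (v : V) :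
    deg G v + deg Gᶜ v + 1 = Fintype.card V := by
  classical
  have hlt := G.degree_lt_card_verts v
  rw [deg_eq_degree, deg_eq_degree, degree_compl]
  omega

lemma edgeCount_top : edgeCount (⊤ : SimpleGraph V) = (Fintype.card V).choose 2 := by
  classical
  rw [edgeCount_eq_card_edgeFinset, card_edgeFinset_top_eq_card_choose_two]

lemma edgeCount_add_edgeCount_compl (G : SimpleGraph V) :
    edgeCount G + edgeCount Gᶜ = (Fintype.card V).choose 2 := by
  have hdisj : Disjoint G.edgeSet Gᶜ.edgeSet := disjoint_edgeSet.2 disjoint_compl_right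
  simp only [← edgeCount_top, ← sup_compl_eq_top (x := G), edgeCount, edgeSet_sup,
    Nat.card_coe_set_eq, Set.ncard_union_eq hdisj]

lemma turanDeficit_eq_edgeCount_compl {k : ℕ} (hk : 0 < k) (D : ℕ) :
    turanDeficit k D = edgeCount (turanGraph D k)ᶜ := by
  suffices h : #(turanGraph D k).edgeFinset + turanDeficit k D = D.choose 2 by
    have hcompl := edgeCount_add_edgeCount_compl (turanGraph D k)
    rw [Fintype.card_fin, edgeCount_eq_card_edgeFinset (turanGraph D k)] at hcompl
    omega
  induction D using Nat.strong_induction_on with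
  | h D ih =>
    rcases lt_or_ge D k with hDk | hkD
    · rw [turanDeficit_eq_zero_of_le hDk.le, ← edgeCount_eq_card_edgeFinset,
        turanGraph_eq_top.2 (.inr hDk.le), edgeCount_top, Fintype.card_fin, add_zero]
    · obtain ⟨D, rfl⟩ := Nat.exists_eq_add_of_le' hkD
      have hmul : D * (k - 1) + D = D * k := by
        rw [← mul_add_one, Nat.sub_one_add_one hk.ne']
      rw [card_edgeFinset_turanGraph_add, turanDeficit_add_self hk, add_choose_two]
      linarith [ih D (by omega)]

lemma turanDeficit_le_edgeCount {k : ℕ} (hk : 0 < k) (h : G.IndepSetFree (k + 1)) :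
    turanDeficit k (Fintype.card V) ≤ edgeCount G := by
  classical
  obtain ⟨T, _, hT⟩ := exists_isTuranMaximal (V := V) hk
  obtain ⟨e⟩ := hT.nonempty_iso_turanGraph
  have hmax : edgeCount Gᶜ ≤ edgeCount T := by
    simpa only [edgeCount_eq_card_edgeFinset] using hT.2 (G.cliqueFree_compl.2 h)
  have hG := edgeCount_add_edgeCount_compl G
  have hturan := edgeCount_add_edgeCount_compl (turanGraph (Fintype.card V) k)
  rw [← turanDeficit_eq_edgeCount_compl hk, Fintype.card_fin, ← edgeCount_congr e] at hturan
  omega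

end EdgeCount

section DegreeIn

open Finset SimpleGraph

open Classical in
/-- The number of neighbours of `x` in the vertex set `A`; the vertex `x` need not lie in `A`. -/
noncomputable def degreeIn {V : Type*} (H : SimpleGraph V) (A : Finset V) (x : V) : ℕ :=
  #{y ∈ A | H.Adj x y}

variable {V : Type*} (H : SimpleGraph V) {A B S : Finset V} {x : V}

lemma degreeIn_mono (h : B ⊆ A) : degreeIn H B x ≤ degreeIn H A x := by
  classical exact card_le_card (filter_subset_filter _ h)

lemma degreeIn_lt_card (hx : x ∈ A) : degreeIn H A x < #A := by
  classical exact card_lt_card <| filter_ssubset.2 ⟨x, hx, H.loopless.irrefl x⟩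

lemma degreeIn_univ [Fintype V] : degreeIn H univ x = deg H x := by
  classical
  rw [deg_eq_degree, ← card_neighborFinset_eq_degree, neighborFinset_eq_filter, degreeIn]

variable {H} in
lemma degreeIn_eq_zero_iff : degreeIn H A x = 0 ↔ ∀ y ∈ A, ¬ H.Adj x y := by
  classical rw [degreeIn, card_eq_zero, filter_eq_empty_iff]

variable {H} in
lemma degreeIn_eq_zero_of_isIndepSet (hS : H.IsIndepSet S) (hx : x ∈ S) : degreeIn H S x = 0 :=
  degreeIn_eq_zero_iff.2 fun _ hy hadj => hS hx hy hadj.ne hadj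

lemma sum_degreeIn_comm : ∑ x ∈ A, degreeIn H B x = ∑ y ∈ B, degreeIn H A y := by
  classical
  simp only [degreeIn, card_filter]
  rw [sum_comm]
  exact sum_congr rfl fun y _ => sum_congr rfl fun x _ => if_congr (H.adj_comm x y) rfl rfl

lemma two_mul_edgeCount_induce :
    2 * edgeCount (H.induce (A : Set V)) = ∑ x ∈ A, degreeIn H A x := by
  classical
  have hdeg (x : A) : deg (H.induce (A : Set V)) x = degreeIn H A x := by
    rw [← degreeIn_univ, degreeIn, degreeIn, ← card_map (.subtype (· ∈ A)), univ_eq_attach]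
    congr 1
    ext y
    simp [and_comm]
  rw [two_mul_edgeCount, ← sum_coe_sort A]
  exact sum_congr rfl fun x _ => hdeg x

lemma edgeCount_induce_mono (h : B ⊆ A) :
    edgeCount (H.induce (B : Set V)) ≤ edgeCount (H.induce (A : Set V)) := by
  have hsum : ∑ x ∈ B, degreeIn H B x ≤ ∑ x ∈ A, degreeIn H A x :=
    (sum_le_sum fun _ _ => degreeIn_mono H h).trans (sum_le_sum_of_subset h)
  rw [← two_mul_edgeCount_induce, ← two_mul_edgeCount_induce] at hsum
  omega

lemma edgeCount_induce_univ [Fintype V] :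
    edgeCount (H.induce ((univ : Finset V) : Set V)) = edgeCount H := by
  have h := two_mul_edgeCount_induce H (A := univ)
  simp only [degreeIn_univ, ← two_mul_edgeCount] at h
  omega

variable {H} in
lemma turanDeficit_card_le_edgeCount_induce {k : ℕ} (hk : 0 < k)
    (h : H.IndepSetFreeOn A (k + 1)) : turanDeficit k #A ≤ edgeCount (H.induce (A : Set V)) := by
  have hfree : (H.induce (A : Set V)).IndepSetFree (k + 1) := fun T hT => by
    refine h (map_subtype_subset T) ⟨?_, (card_map _).trans hT.card_eq⟩
    rw [coe_map]
    exact (Subtype.val_injective.injOn.pairwise_image).2 hT.isIndepSet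
  simpa using turanDeficit_le_edgeCount hk hfree

lemma degreeIn_sdiff_add_degreeIn [DecidableEq V] (hSA : S ⊆ A) (x : V) :
    degreeIn H (A \ S) x + degreeIn H S x = degreeIn H A x := by
  simp only [degreeIn, card_filter, sum_sdiff hSA]

variable {H}

lemma sum_sdiff_degreeIn_eq_sum_degreeIn [DecidableEq V] (hSA : S ⊆ A)
    (hS : H.IsIndepSet S) :
    ∑ x ∈ A \ S, degreeIn H S x = ∑ x ∈ S, degreeIn H A x := by
  rw [sum_degreeIn_comm]
  refine sum_congr rfl fun x hx => ?_
  rw [← degreeIn_sdiff_add_degreeIn H hSA, degreeIn_eq_zero_of_isIndepSet hS hx, add_zero]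

lemma edgeCount_induce_sdiff_add_sum_degreeIn [DecidableEq V] (hSA : S ⊆ A)
    (hS : H.IsIndepSet S) :
    edgeCount (H.induce ((A \ S : Finset V) : Set V)) + ∑ x ∈ S, degreeIn H A x =
      edgeCount (H.induce (A : Set V)) := by
  have hcross := sum_sdiff_degreeIn_eq_sum_degreeIn hSA hS
  have hsplit : ∑ x ∈ A, degreeIn H A x =
      ∑ x ∈ A \ S, degreeIn H (A \ S) x + ∑ x ∈ A \ S, degreeIn H S x +
        ∑ x ∈ S, degreeIn H A x := by
    simp only [← sum_add_distrib, degreeIn_sdiff_add_degreeIn H hSA, sum_sdiff hSA]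
  rw [← two_mul_edgeCount_induce, ← two_mul_edgeCount_induce] at hsplit
  omega

lemma card_filter_erase_not_adj [DecidableEq V] (H : SimpleGraph V) [DecidableRel H.Adj]
    (hx : x ∈ A) :
    #{y ∈ A.erase x | ¬ H.Adj x y} = #A - 1 - degreeIn H A x := by
  classical
  have hadj : #{y ∈ A.erase x | H.Adj x y} = degreeIn H A x := by
    rw [degreeIn]
    congr 1
    ext y
    simp only [mem_filter, mem_erase]
    exact ⟨fun h => ⟨h.1.2, h.2⟩, fun h => ⟨⟨h.2.ne', h.1⟩, h.2⟩⟩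
  have hsum := card_filter_add_card_filter_not (s := A.erase x) (H.Adj x)
  rw [hadj, card_erase_of_mem hx] at hsum
  omega

lemma exists_isNIndepSet_mem_of_edgeCount_lt {k : ℕ} (hk : 0 < k) (hx : x ∈ A)
    (h : edgeCount (H.induce (A : Set V)) <
      degreeIn H A x + turanDeficit k (#A - 1 - degreeIn H A x)) :
    ∃ S ⊆ A, x ∈ S ∧ H.IsNIndepSet (k + 2) S := by
  classical
  set N : Finset V := {y ∈ A.erase x | ¬ H.Adj x y} with hN
  have hNA : N ⊆ A \ {x} := by
    rw [sdiff_singleton_eq_erase]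
    exact filter_subset ..
  have hedges : edgeCount (H.induce (N : Set V)) < turanDeficit k #N := by
    have hsplit := edgeCount_induce_sdiff_add_sum_degreeIn (H := H) (singleton_subset_iff.2 hx)
      (by simp)
    have hmono := edgeCount_induce_mono H hNA
    rw [sum_singleton] at hsplit
    rw [hN, card_filter_erase_not_adj H hx, ← hN]
    omega
  obtain ⟨T, hTN, hT⟩ : ∃ T ⊆ N, H.IsNIndepSet (k + 1) T := by
    by_contra! hfree
    exact hedges.not_ge <| turanDeficit_card_le_edgeCount_induce hk fun T hTN =>
      hfree T (coe_subset.1 hTN)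
  have hadj : ∀ y ∈ T, Hᶜ.Adj x y := fun y hy => by
    have hy := mem_filter.1 (hTN hy)
    exact ⟨(ne_of_mem_erase hy.1).symm, hy.2⟩
  refine ⟨insert x T, insert_subset hx fun y hy => (mem_sdiff.1 (hNA (hTN hy))).1,
    mem_insert_self .., ?_⟩
  exact (isNClique_compl H).1 (((isNClique_compl H).2 hT).insert hadj)

end DegreeIn

section Greedy

open Finset SimpleGraph

variable {V : Type*}

/-- The complement, restricted to `A`, of a graph satisfying the edge bounds of the theorem: `A`
has `(k + 2) * m` vertices, and `H` has fewer edges on `A` than the complement of either extremal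
configuration. For the second configuration this is imposed at every `x ∈ A`, the star of `x` being
completed by the non-edges of a Turán graph on the remaining vertices. -/
structure SparseOn (H : SimpleGraph V) (k m : ℕ) (A : Finset V) : Prop where
  card_eq : #A = (k + 2) * m
  edgeCount_lt_choose_two : edgeCount (H.induce (A : Set V)) < (m + 1).choose 2
  edgeCount_lt_degreeIn_add : ∀ x ∈ A, edgeCount (H.induce (A : Set V)) <
    degreeIn H A x + turanDeficit k (#A - 1 - degreeIn H A x)

/-- `S` is the set removed from `A` by one step of the greedy procedure: an independent `r`-subset
of `A` through the vertex `x₀` of largest degree, of largest possible degree sum. -/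
structure IsGreedyIndepSet (H : SimpleGraph V) (r : ℕ) (A : Finset V) (x₀ : V) (S : Finset V) :
    Prop where
  subset : S ⊆ A
  mem : x₀ ∈ S
  isNIndepSet : H.IsNIndepSet r S
  degreeIn_le : ∀ x ∈ A, degreeIn H A x ≤ degreeIn H A x₀
  sum_degreeIn_le : ∀ T ⊆ A, x₀ ∈ T → H.IsNIndepSet r T →
    ∑ x ∈ T, degreeIn H A x ≤ ∑ x ∈ S, degreeIn H A x

variable {H : SimpleGraph V} {k m M r : ℕ} {A S : Finset V} {x₀ x y z : V}

lemma SparseOn.exists_isGreedyIndepSet (hk : 0 < k) (h : SparseOn H k m A) (hA : A.Nonempty) :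
    ∃ x₀ S, IsGreedyIndepSet H (k + 2) A x₀ S := by
  classical
  obtain ⟨x₀, hx₀, hmax⟩ := A.exists_max_image (degreeIn H A) hA
  let candidates : Finset (Finset V) := {S ∈ A.powerset | x₀ ∈ S ∧ H.IsNIndepSet (k + 2) S}
  have hcandidates : candidates.Nonempty := by
    obtain ⟨S, hSA, hS⟩ :=
      exists_isNIndepSet_mem_of_edgeCount_lt hk hx₀ (h.edgeCount_lt_degreeIn_add x₀ hx₀)
    exact ⟨S, mem_filter.2 ⟨mem_powerset.2 hSA, hS⟩⟩
  obtain ⟨S, hS, hSmax⟩ :=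
    candidates.exists_max_image (fun S => ∑ x ∈ S, degreeIn H A x) hcandidates
  obtain ⟨hSA, hx₀S, hSindep⟩ := mem_filter.1 hS
  exact ⟨x₀, S, mem_powerset.1 hSA, hx₀S, hSindep, hmax, fun T hTA hx₀T hT =>
    hSmax T (mem_filter.2 ⟨mem_powerset.2 hTA, hx₀T, hT⟩)⟩

namespace IsGreedyIndepSet

lemma degreeIn_le_of_degreeIn_eq_zero (h : IsGreedyIndepSet H r A x₀ S) (hyA : y ∈ A)
    (hyS : y ∉ S) (hy : degreeIn H S y = 0) (hz : z ∈ S) (hzx₀ : z ≠ x₀) :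
    degreeIn H A y ≤ degreeIn H A z := by
  classical
  have hnonadj := degreeIn_eq_zero_iff.1 hy
  have hswap : H.IsNIndepSet r (insert y (S.erase z)) := by
    refine (isNClique_compl H).1 <|
      ((isNClique_compl H).2 h.isNIndepSet).insert_erase (fun w hw => ?_) hz
    have hwS := (mem_sdiff.1 hw).1
    exact ⟨fun hyw => hyS (hyw ▸ hwS), hnonadj w hwS⟩
  have hle := h.sum_degreeIn_le _ (insert_subset hyA ((erase_subset z S).trans h.subset))
    (mem_insert_of_mem (mem_erase.2 ⟨hzx₀.symm, h.mem⟩)) hswap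
  rw [sum_insert fun hmem => hyS (mem_of_mem_erase hmem), ← add_sum_erase S _ hz] at hle
  exact Nat.le_of_add_le_add_right hle

lemma degreeIn_le_sum (h : IsGreedyIndepSet H r A x₀ S) :
    degreeIn H A x₀ ≤ ∑ x ∈ S, degreeIn H A x :=
  single_le_sum_of_canonicallyOrdered h.mem

lemma degreeIn_add_mul_le_sum (h : IsGreedyIndepSet H (r + 1) A x₀ S) {a : ℕ}
    (ha : ∀ z ∈ S, z ≠ x₀ → a ≤ degreeIn H A z) :
    degreeIn H A x₀ + r * a ≤ ∑ x ∈ S, degreeIn H A x := by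
  classical
  have hcard : #(S.erase x₀) = r := by
    rw [card_erase_of_mem h.mem, h.isNIndepSet.card_eq, Nat.add_sub_cancel]
  have herase : r * a ≤ ∑ x ∈ S.erase x₀, degreeIn H A x := by
    rw [← hcard]
    exact card_nsmul_le_sum _ _ _ fun z hz => ha z (mem_of_mem_erase hz) (ne_of_mem_erase hz)
  rw [← add_sum_erase S _ h.mem]
  exact Nat.add_le_add_left herase _

variable [DecidableEq V]

lemma card_sdiff (h : IsGreedyIndepSet H r A x₀ S) (hA : #A = r * (M + 1)) :
    #(A \ S) = r * M := by
  rw [card_sdiff_of_subset h.subset, hA, h.isNIndepSet.card_eq, mul_add_one, Nat.add_sub_cancel]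

lemma edgeCount_sdiff_add_sum (h : IsGreedyIndepSet H r A x₀ S) :
    edgeCount (H.induce ((A \ S : Finset V) : Set V)) + ∑ x ∈ S, degreeIn H A x =
      edgeCount (H.induce (A : Set V)) :=
  edgeCount_induce_sdiff_add_sum_degreeIn h.subset h.isNIndepSet.isIndepSet

lemma degreeIn_le_add_mul_degreeIn (h : IsGreedyIndepSet H r A x₀ S) (hy : y ∈ A \ S)
    (hz : z ∈ S) (hzx₀ : z ≠ x₀) {c : ℕ} (hc : degreeIn H A x₀ ≤ degreeIn H A z + c) :
    degreeIn H A y ≤ degreeIn H A z + c * degreeIn H S y := by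
  obtain ⟨hyA, hyS⟩ := mem_sdiff.1 hy
  rcases Nat.eq_zero_or_pos (degreeIn H S y) with hzero | hpos
  · exact (h.degreeIn_le_of_degreeIn_eq_zero hyA hyS hzero hz hzx₀).trans le_self_add
  · calc degreeIn H A y ≤ degreeIn H A z + c := (h.degreeIn_le y hyA).trans hc
      _ ≤ degreeIn H A z + c * degreeIn H S y :=
        Nat.add_le_add_left (Nat.le_mul_of_pos_right c hpos) _

lemma two_mul_edgeCount_sdiff_add_sum_le (h : IsGreedyIndepSet H (k + 2) A x₀ S)
    (hA : #A = (k + 2) * (M + 1)) (hsum : ∑ x ∈ S, degreeIn H A x ≤ M) :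
    2 * edgeCount (H.induce ((A \ S : Finset V) : Set V)) + ∑ x ∈ S, degreeIn H A x ≤
      M * ∑ x ∈ S, degreeIn H A x := by
  have herase : (S.erase x₀).Nonempty := by
    rw [← card_pos, card_erase_of_mem h.mem, h.isNIndepSet.card_eq]
    omega
  obtain ⟨z, hz, hzmin⟩ := (S.erase x₀).exists_min_image (degreeIn H A) herase
  obtain ⟨hzx₀, hzS⟩ := mem_erase.1 hz
  obtain ⟨c, hc⟩ := Nat.exists_eq_add_of_le (h.degreeIn_le z (h.subset hzS))
  have hlower := h.degreeIn_add_mul_le_sum fun w hwS hwx₀ => hzmin w (mem_erase.2 ⟨hwx₀, hwS⟩)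
  have hcross := sum_sdiff_degreeIn_eq_sum_degreeIn h.subset h.isNIndepSet.isIndepSet
  have hupper : 2 * edgeCount (H.induce ((A \ S : Finset V) : Set V)) +
      ∑ x ∈ S, degreeIn H A x ≤
        (k + 2) * M * degreeIn H A z + c * ∑ x ∈ S, degreeIn H A x := by
    calc 2 * edgeCount (H.induce ((A \ S : Finset V) : Set V)) + ∑ x ∈ S, degreeIn H A x
        = ∑ y ∈ A \ S, degreeIn H A y := by
          rw [two_mul_edgeCount_induce, ← hcross, ← sum_add_distrib]
          exact sum_congr rfl fun y _ => degreeIn_sdiff_add_degreeIn H h.subset y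
      _ ≤ ∑ y ∈ A \ S, (degreeIn H A z + c * degreeIn H S y) :=
          sum_le_sum fun y hy => h.degreeIn_le_add_mul_degreeIn hy hzS hzx₀ hc.le
      _ = (k + 2) * M * degreeIn H A z + c * ∑ x ∈ S, degreeIn H A x := by
          rw [sum_add_distrib, sum_const, ← mul_sum, hcross, h.card_sdiff hA, smul_eq_mul]
  nlinarith [Nat.mul_le_mul_left c hsum, Nat.mul_le_mul_left M hlower]

lemma edgeCount_sdiff_lt_choose_two (h : IsGreedyIndepSet H (k + 2) A x₀ S) (hM : 0 < M)
    (hA : #A = (k + 2) * (M + 1))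
    (he : edgeCount (H.induce (A : Set V)) < (M + 2).choose 2) :
    edgeCount (H.induce ((A \ S : Finset V) : Set V)) < (M + 1).choose 2 := by
  have hsplit := h.edgeCount_sdiff_add_sum
  rcases lt_or_ge M (∑ x ∈ S, degreeIn H A x) with hlarge | hsmall
  · have hchoose : (M + 2).choose 2 = (M + 1) + (M + 1).choose 2 := by
      rw [Nat.choose_succ_succ' (M + 1) 1, Nat.choose_one_right]
    omega
  · have hle := h.two_mul_edgeCount_sdiff_add_sum_le hA hsmall
    have hchoose := two_mul_choose_two_succ M
    nlinarith [Nat.mul_le_mul_left M hsmall]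

lemma degreeIn_sdiff_lt_or_add_two_mul_le_sum (h : IsGreedyIndepSet H (k + 2) A x₀ S) (hk : 0 < k)
    (hx : x ∈ A \ S) :
    degreeIn H (A \ S) x < degreeIn H A x₀ ∨
      degreeIn H (A \ S) x ≤ degreeIn H A x₀ ∧
        degreeIn H A x₀ + 2 * degreeIn H (A \ S) x ≤ ∑ z ∈ S, degreeIn H A z := by
  obtain ⟨hxA, hxS⟩ := mem_sdiff.1 hx
  have hsplit := degreeIn_sdiff_add_degreeIn H h.subset x
  have hmax := h.degreeIn_le x hxA
  rcases Nat.eq_zero_or_pos (degreeIn H S x) with hzero | hpos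
  · have hsum := h.degreeIn_add_mul_le_sum fun z hzS hzx₀ =>
      h.degreeIn_le_of_degreeIn_eq_zero hxA hxS hzero hzS hzx₀
    exact .inr ⟨by omega, by nlinarith⟩
  · exact .inl (by omega)

lemma edgeCount_sdiff_lt_degreeIn_add (h : IsGreedyIndepSet H (k + 2) A x₀ S)
    (hA : SparseOn H k (M + 1) A) (hk : 0 < k) (hM : 0 < M) (hx : x ∈ A \ S) :
    edgeCount (H.induce ((A \ S : Finset V) : Set V)) < degreeIn H (A \ S) x +
      turanDeficit k (#(A \ S) - 1 - degreeIn H (A \ S) x) := by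
  have hchoose := h.edgeCount_sdiff_lt_choose_two hM hA.card_eq hA.edgeCount_lt_choose_two
  have hstar := hA.edgeCount_lt_degreeIn_add x₀ (h.subset h.mem)
  have hdegree := degreeIn_lt_card H hx
  rw [h.card_sdiff hA.card_eq] at hdegree ⊢
  rw [hA.card_eq, ← h.edgeCount_sdiff_add_sum] at hstar
  have hD : (k + 2) * M - 1 - degreeIn H (A \ S) x + degreeIn H (A \ S) x + 1 = (k + 2) * M := by
    omega
  by_contra! hle
  rcases lt_or_ge (degreeIn H (A \ S) x) M with hlt | hge
  · have hturan : (M + 1).choose 2 ≤ turanDeficit k ((k + 2) * M - 1 - degreeIn H (A \ S) x) :=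
      choose_two_le_turanDeficit hk (by nlinarith)
    omega
  · have hbound := choose_two_le_add_of_lt_add_turanDeficit hk hD hge h.degreeIn_le_sum
      (h.degreeIn_sdiff_lt_or_add_two_mul_le_sum hk hx) hstar hle
    exact (h.edgeCount_sdiff_add_sum ▸ hbound).not_gt hA.edgeCount_lt_choose_two

end IsGreedyIndepSet

lemma SparseOn.sdiff [DecidableEq V] (hA : SparseOn H k (m + 1) A) (hk : 0 < k) (hm : 0 < m)
    (hS : IsGreedyIndepSet H (k + 2) A x₀ S) : SparseOn H k m (A \ S) where
  card_eq := hS.card_sdiff hA.card_eq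
  edgeCount_lt_choose_two :=
    hS.edgeCount_sdiff_lt_choose_two hm hA.card_eq hA.edgeCount_lt_choose_two
  edgeCount_lt_degreeIn_add _ hx := hS.edgeCount_sdiff_lt_degreeIn_add hA hk hm hx

lemma SparseOn.pos (hA : SparseOn H k m A) : 0 < m := by
  rcases Nat.eq_zero_or_pos m with rfl | hm
  · exact absurd hA.edgeCount_lt_choose_two (Nat.not_lt_zero _)
  · exact hm

theorem SparseOn.exists_finpartition [DecidableEq V] (hk : 0 < k) (hA : SparseOn H k m A) :
    ∃ P : Finpartition A, ∀ p ∈ P.parts, H.IsNIndepSet (k + 2) p := by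
  induction m generalizing A with
  | zero => exact absurd hA.pos (lt_irrefl 0)
  | succ m ih =>
    have hAne : A.Nonempty := card_pos.1 (by rw [hA.card_eq]; positivity)
    obtain ⟨x₀, S, hS⟩ := hA.exists_isGreedyIndepSet hk hAne
    have hSne : S ≠ ∅ := ne_empty_of_mem hS.mem
    obtain ⟨P, hP⟩ : ∃ P : Finpartition (A \ S), ∀ p ∈ P.parts, H.IsNIndepSet (k + 2) p := by
      rcases Nat.eq_zero_or_pos m with rfl | hm
      · have hempty : A \ S = ∅ := card_eq_zero.1 (hS.card_sdiff hA.card_eq)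
        rw [hempty]
        exact ⟨Finpartition.empty _, fun p hp => absurd hp (notMem_empty p)⟩
      · exact ih (hA.sdiff hk hm hS)
    refine ⟨P.extend hSne sdiff_disjoint (sdiff_union_of_subset hS.subset), fun p hp => ?_⟩
    rcases mem_insert.1 hp with rfl | hp
    · exact hS.isNIndepSet
    · exact hP p hp

end Greedy

section PerfectPacking

open Finset SimpleGraph

variable {V : Type*} [Fintype V] {k m n r D : ℕ}

lemma sparseOn_univ (hk : 0 < k) {H : SimpleGraph V} (hcard : Fintype.card V = (k + 2) * m)
    (hkD : k ≤ D) (hdeg : ∀ v, deg H v + D + 1 ≤ Fintype.card V)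
    (hchoose : edgeCount H < (m + 1).choose 2)
    (hstar : edgeCount H < Fintype.card V - 1 - D + turanDeficit k D) :
    SparseOn H k m univ where
  card_eq := hcard
  edgeCount_lt_choose_two := by rwa [edgeCount_induce_univ]
  edgeCount_lt_degreeIn_add x _ := by
    rw [edgeCount_induce_univ, degreeIn_univ, card_univ]
    obtain ⟨j, hj⟩ := Nat.exists_eq_add_of_le (hdeg x)
    have hconvex := turanDeficit_add_le_turanDeficit_add hk hkD j
    rw [show Fintype.card V - 1 - deg H x = D + j by omega]
    omega

lemma hasPerfectKrPacking_of_sparseOn_compl (hk : 0 < k) {G : SimpleGraph (Fin n)}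
    (h : SparseOn Gᶜ k m univ) : HasPerfectKrPacking G (k + 2) := by
  obtain ⟨P, hP⟩ := h.exists_finpartition hk
  refine ⟨P.parts, fun p hp => ?_, P.disjoint, P.biUnion_parts⟩
  have hclique := (isNIndepSet_compl G).1 (hP p hp)
  exact ⟨hclique.card_eq, hclique.isClique⟩

lemma hasPerfectKrPacking_of_edgeCount_compl_lt (hk : 0 < k) (hkD : k ≤ D)
    {G : SimpleGraph (Fin ((k + 2) * m))} (hdeg : ∀ v, D ≤ deg G v)
    (hG : edgeCount Gᶜ < min ((m + 1).choose 2) ((k + 2) * m - 1 - D + turanDeficit k D)) :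
    HasPerfectKrPacking G (k + 2) := by
  obtain ⟨hchoose, hstar⟩ := lt_min_iff.1 hG
  refine hasPerfectKrPacking_of_sparseOn_compl hk <|
    sparseOn_univ hk (Fintype.card_fin _) hkD (fun v => ?_) hchoose (by rwa [Fintype.card_fin])
  have hsum := deg_add_deg_compl_add_one G v
  have hdeg_v := hdeg v
  omega

lemma exists_isNClique_mem_of_hasPerfectKrPacking {G : SimpleGraph (Fin n)}
    (h : HasPerfectKrPacking G r) (v : Fin n) : ∃ p, G.IsNClique r p ∧ v ∈ p := by
  obtain ⟨P, hP, -, hcover⟩ := h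
  obtain ⟨p, hp, hv⟩ := mem_biUnion.1 (hcover ▸ mem_univ v)
  exact ⟨p, ⟨(hP p hp).2, (hP p hp).1⟩, hv⟩

lemma mul_card_le_of_hasPerfectKrPacking {G : SimpleGraph (Fin n)}
    (h : HasPerfectKrPacking G r) {I : Finset (Fin n)} (hI : G.IsIndepSet I) : r * #I ≤ n := by
  obtain ⟨P, hP, hdisj, hcover⟩ := h
  have hcard : r * #P = n := by
    calc r * #P = ∑ p ∈ P, #(id p) := by
          rw [mul_comm]
          exact (sum_const_nat fun p hp => (hP p hp).1).symm
      _ = #(P.biUnion id) := (card_biUnion hdisj).symm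
      _ = n := by rw [hcover, card_univ, Fintype.card_fin]
  have hinter (p) (hp : p ∈ P) : #(I ∩ p) ≤ 1 := card_le_one.2 fun a ha b hb => by
    by_contra hab
    rw [mem_inter] at ha hb
    exact hI ha.1 hb.1 hab ((hP p hp).2 ha.2 hb.2 hab)
  have hIP : #I ≤ #P := by
    calc #I = #(P.biUnion fun p => I ∩ p) := by
          rw [← inter_biUnion, show P.biUnion (fun p => p) = univ from hcover, inter_univ]
      _ ≤ #P * 1 := card_biUnion_le_card_mul _ _ _ hinter
      _ = #P := mul_one _
  exact (Nat.mul_le_mul_left r hIP).trans_eq hcard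

end PerfectPacking

section ExtremalGraphs

open Finset SimpleGraph

variable {V : Type*} [Fintype V] {k m n r D : ℕ}

lemma deg_lt_card (G : SimpleGraph V) (v : V) : deg G v < Fintype.card V := by
  have hsum := deg_add_deg_compl_add_one G v
  omega

lemma edgeCount_starGraph_add_one (v : V) : edgeCount (starGraph v) + 1 = Fintype.card V := by
  classical
  rw [edgeCount_eq_card_edgeFinset]
  exact (isTree_starGraph v).card_edgeFinset

lemma deg_compl_turanGraph_lt {c : ℕ} (hD : D ≤ k * c) (v : Fin D) :
    deg (turanGraph D k)ᶜ v < c := by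
  classical
  have hdiv (w : Fin D) : w / k < c := Nat.div_lt_of_lt_mul (w.2.trans_le hD)
  have hmod {w : Fin D} (hw : w ∈ (turanGraph D k)ᶜ.neighborFinset v) :
      v ≠ w ∧ (v % k : ℕ) = w % k := by
    simpa [turanGraph_adj] using hw
  have hext {w w' : Fin D} (hmod : (w % k : ℕ) = w' % k) (hdiv : (w / k : ℕ) = w' / k) : w = w' :=
    Fin.ext (by rw [← Nat.div_add_mod w k, ← Nat.div_add_mod w' k, hmod, hdiv])
  have hle : #((turanGraph D k)ᶜ.neighborFinset v) ≤ #((range c).erase (v / k)) := by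
    refine card_le_card_of_injOn (fun w => w / k) (fun w hw => ?_) fun w hw w' hw' hww' => ?_
    · exact mem_erase.2 ⟨fun h => (hmod hw).1 (hext (hmod hw).2 h.symm), mem_range.2 (hdiv w)⟩
    · exact hext ((hmod hw).2.symm.trans (hmod hw').2) hww'
  rw [card_neighborFinset_eq_degree, ← deg_eq_degree,
    card_erase_of_mem (mem_range.2 (hdiv v)), card_range] at hle
  exact hle.trans_lt (Nat.sub_one_lt (Nat.ne_zero_of_lt (hdiv v)))

lemma exists_compl_iso (H : SimpleGraph V) (hcard : Fintype.card V = n)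
    (hdeg : ∀ v, deg H v + D + 1 ≤ n) :
    ∃ G : SimpleGraph (Fin n), (∀ v, D ≤ deg G v) ∧ Nonempty (Gᶜ ≃g H) := by
  refine ⟨(H.overFin hcard)ᶜ, fun v => ?_, ⟨by rw [compl_compl]; exact (H.overFinIso hcard).symm⟩⟩
  have hsum := deg_add_deg_compl_add_one (H.overFin hcard) v
  rw [Fintype.card_fin, deg_congr (H.overFinIso hcard).symm] at hsum
  have hdeg_v := hdeg ((H.overFinIso hcard).symm v)
  omega

lemma exists_edgeCount_compl_eq_choose_two_not_hasPerfectKrPacking (hD : m + 1 + D ≤ r * m) :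
    ∃ G : SimpleGraph (Fin (r * m)), (∀ v, D ≤ deg G v) ∧
      edgeCount Gᶜ = (m + 1).choose 2 ∧ ¬ HasPerfectKrPacking G r := by
  have hr : 0 < r := Nat.pos_of_ne_zero (by rintro rfl; omega)
  let H : SimpleGraph (Fin (m + 1) ⊕ Fin (r * m - (m + 1))) := ⊤ ⊕g ⊥
  have hcard : Fintype.card (Fin (m + 1) ⊕ Fin (r * m - (m + 1))) = r * m := by
    rw [Fintype.card_sum, Fintype.card_fin, Fintype.card_fin]
    omega
  have hH : ∀ v, deg H v + D + 1 ≤ r * m := by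
    rintro (v | v)
    · have hlt := deg_lt_card (⊤ : SimpleGraph (Fin (m + 1))) v
      rw [Fintype.card_fin] at hlt
      rw [deg_sum_inl]
      omega
    · rw [deg_sum_inr, deg_bot]
      omega
  obtain ⟨G, hdeg, ⟨e⟩⟩ := exists_compl_iso H hcard hH
  refine ⟨G, hdeg, ?_, fun hpack => ?_⟩
  · rw [edgeCount_congr e, edgeCount_sum, edgeCount_top, edgeCount_bot, Fintype.card_fin, add_zero]
  · have hclique : ¬ Gᶜ.CliqueFree (m + 1) :=
      (not_cliqueFree_iff_top_isContained _).2
        ⟨(e.symm.toEmbedding.comp Embedding.sumInl).toCopy⟩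
    simp only [cliqueFree_compl, IndepSetFree, not_forall, not_not] at hclique
    obtain ⟨I, hI⟩ := hclique
    have hmul := mul_card_le_of_hasPerfectKrPacking hpack hI.isIndepSet
    rw [hI.card_eq, mul_add_one] at hmul
    omega

lemma card_le_of_isClique_of_compl_iso {V : Type*} {c : ℕ} (hk : 0 < k) {G : SimpleGraph V}
    (e : Gᶜ ≃g (turanGraph D k)ᶜ ⊕g starGraph (0 : Fin (c + 1))) {p : Finset V}
    (hp : G.IsClique p) (hcenter : e.symm (.inr 0) ∈ p) : #p ≤ k + 1 := by
  classical
  have hnonadj {v w : V} (hv : v ∈ p) (hw : w ∈ p) :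
      ¬ ((turanGraph D k)ᶜ ⊕g starGraph (0 : Fin (c + 1))).Adj (e v) (e w) := fun h =>
    have hcompl := e.map_adj_iff.1 h
    hcompl.2 (hp hv hw hcompl.1)
  have hinl {w : V} (hw : w ∈ p.erase (e.symm (.inr 0))) : ∃ i, e w = .inl i := by
    obtain ⟨hne, hwp⟩ := mem_erase.1 hw
    have hcenter_nonadj := hnonadj hcenter hwp
    rcases hew : e w with i | j
    · exact ⟨i, rfl⟩
    · rw [hew, e.apply_symm_apply, sum_adj_inr, starGraph_adj_center_iff, not_not]
        at hcenter_nonadj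
      exact absurd (e.injective (by rw [hew, e.apply_symm_apply, ← hcenter_nonadj])) hne
  have hle : #(p.erase (e.symm (.inr 0))) ≤ #(range k) := by
    refine card_le_card_of_injOn (fun w => (e w).elim (fun i : Fin D => (i % k : ℕ)) 0)
      (fun w hw => ?_) fun w hw w' hw' hww' => ?_
    · obtain ⟨i, hi⟩ := hinl hw
      simpa [hi] using Nat.mod_lt i hk
    · obtain ⟨i, hi⟩ := hinl hw
      obtain ⟨i', hi'⟩ := hinl hw'
      have hturan := hnonadj (mem_of_mem_erase hw) (mem_of_mem_erase hw')
      simp only [hi, hi', Sum.elim_inl] at hww'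
      rw [hi, hi', sum_adj_inl, compl_adj, turanGraph_adj, hww'] at hturan
      have hii' : i = i' := by simpa using hturan
      exact e.injective (hi.trans (hii' ▸ hi'.symm))
  rw [card_erase_of_mem hcenter, card_range] at hle
  omega

lemma exists_edgeCount_compl_eq_add_turanDeficit_not_hasPerfectKrPacking (hk : 0 < k) {c : ℕ}
    (hDk : D ≤ k * c) (hc : c + D ≤ n) (hD : D < n) :
    ∃ G : SimpleGraph (Fin n), (∀ v, D ≤ deg G v) ∧
      edgeCount Gᶜ = n - 1 - D + turanDeficit k D ∧ ¬ HasPerfectKrPacking G (k + 2) := by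
  obtain ⟨j, rfl⟩ := Nat.exists_eq_add_of_lt hD
  let H : SimpleGraph (Fin D ⊕ Fin (j + 1)) := (turanGraph D k)ᶜ ⊕g starGraph 0
  have hcard : Fintype.card (Fin D ⊕ Fin (j + 1)) = D + j + 1 := by
    rw [Fintype.card_sum, Fintype.card_fin, Fintype.card_fin, add_assoc]
  have hH : ∀ v, deg H v + D + 1 ≤ D + j + 1 := by
    rintro (v | v)
    · have hlt := deg_compl_turanGraph_lt hDk v
      rw [deg_sum_inl]
      omega
    · have hlt := deg_lt_card (starGraph (0 : Fin (j + 1))) v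
      rw [Fintype.card_fin] at hlt
      rw [deg_sum_inr]
      omega
  obtain ⟨G, hdeg, ⟨e⟩⟩ := exists_compl_iso H hcard hH
  refine ⟨G, hdeg, ?_, fun hpack => ?_⟩
  · have hstar := edgeCount_starGraph_add_one (0 : Fin (j + 1))
    rw [Fintype.card_fin] at hstar
    rw [edgeCount_congr e, edgeCount_sum, ← turanDeficit_eq_edgeCount_compl hk]
    omega
  · obtain ⟨p, hp, hcenter⟩ :=
      exists_isNClique_mem_of_hasPerfectKrPacking hpack (e.symm (.inr 0))
    have hle := card_le_of_isClique_of_compl_iso hk e hp.isClique hcenter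
    rw [hp.card_eq] at hle
    omega

lemma exists_edgeCount_compl_eq_min_not_hasPerfectKrPacking (hk : 0 < k)
    (hD : m + 1 + D ≤ (k + 2) * m) :
    ∃ G : SimpleGraph (Fin ((k + 2) * m)), (∀ v, D ≤ deg G v) ∧
      edgeCount Gᶜ = min ((m + 1).choose 2) ((k + 2) * m - 1 - D + turanDeficit k D) ∧
        ¬ HasPerfectKrPacking G (k + 2) := by
  rcases le_or_gt ((m + 1).choose 2) ((k + 2) * m - 1 - D + turanDeficit k D) with hle | hlt
  · rw [min_eq_left hle]
    exact exists_edgeCount_compl_eq_choose_two_not_hasPerfectKrPacking hD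
  · rw [min_eq_right hlt.le]
    refine exists_edgeCount_compl_eq_add_turanDeficit_not_hasPerfectKrPacking hk
      (c := m + 1) ?_ hD (by omega)
    by_contra! hDk
    have hturan := choose_two_le_turanDeficit hk (M := m) (D := D) (by nlinarith)
    omega

lemma gFun_add_min_eq_choose_two (hk : 0 < k) (hm : 0 < m) (hD : D < (k + 2) * m) :
    gFun ((k + 2) * m) (k + 2) D +
      min ((m + 1).choose 2) ((k + 2) * m - 1 - D + turanDeficit k D) =
        ((k + 2) * m).choose 2 := by
  have hfirst : (m + 1).choose 2 ≤ ((k + 2) * m).choose 2 := Nat.choose_le_choose 2 (by nlinarith)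
  have hturan := edgeCount_add_edgeCount_compl (turanGraph D k)
  rw [Fintype.card_fin, ← turanDeficit_eq_edgeCount_compl hk] at hturan
  have hsecond : ((k + 2) * m).choose 2 = D * ((k + 2) * m - D) +
      ((k + 2) * m - 1 - D).choose 2 + edgeCount (turanGraph D k) +
        ((k + 2) * m - 1 - D + turanDeficit k D) := by
    obtain ⟨j, hj⟩ := Nat.exists_eq_add_of_lt hD
    rw [hj, show D + j + 1 - D = j + 1 by omega, show D + j + 1 - 1 - D = j by omega, add_assoc,
      add_choose_two, add_choose_two j 1, mul_one, Nat.choose_eq_zero_of_lt one_lt_two]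
    omega
  rw [gFun, Nat.mul_div_cancel_left m (by omega), Nat.add_sub_cancel]
  omega

end ExtremalGraphs

/-- Let `r ≥ 3` divide `n` and `r - 1 ≤ D ≤ (r-1)n/r - 1`. Every graph on `n` vertices with
minimum degree at least `D` and more than `g(n,r,D)` edges has a perfect `K_r`-packing, and
there is a graph with minimum degree at least `D` and exactly `g(n,r,D)` edges with no
perfect `K_r`-packing. -/
theorem stmt1 (n r D : ℕ) (hr : 3 ≤ r) (hdvd : r ∣ n) (hn : 0 < n)
    (hD1 : r - 1 ≤ D) (hD2 : D ≤ (r - 1) * (n / r) - 1) :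
    (∀ G : SimpleGraph (Fin n), (∀ v, D ≤ deg G v) →
      gFun n r D < edgeCount G → HasPerfectKrPacking G r) ∧
    (∃ G' : SimpleGraph (Fin n), (∀ v, D ≤ deg G' v) ∧
      edgeCount G' = gFun n r D ∧ ¬ HasPerfectKrPacking G' r) := by
  obtain ⟨k, rfl⟩ := Nat.exists_eq_add_of_le' (show 2 ≤ r by omega)
  obtain ⟨m, rfl⟩ := hdvd
  have hk : 0 < k := by omega
  have hm : 0 < m := Nat.pos_of_mul_pos_left hn
  have hD : m + 1 + D ≤ (k + 2) * m := by
    rw [Nat.mul_div_cancel_left m (by omega), show k + 2 - 1 = k + 1 by omega] at hD2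
    have hpos : 0 < (k + 1) * m := by positivity
    linarith [Nat.add_le_of_le_sub hpos hD2]
  have hg := gFun_add_min_eq_choose_two hk hm (D := D) (by omega)
  have hcompl (G : SimpleGraph (Fin ((k + 2) * m))) := edgeCount_add_edgeCount_compl G
  simp only [Fintype.card_fin] at hcompl
  refine ⟨fun G hdeg hG => ?_, ?_⟩
  · have hGcompl := hcompl G
    exact hasPerfectKrPacking_of_edgeCount_compl_lt hk (by omega) hdeg (by omega)
  · obtain ⟨G, hdeg, hG, hpack⟩ := exists_edgeCount_compl_eq_min_not_hasPerfectKrPacking hk hD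
    have hGcompl := hcompl G
    exact ⟨G, hdeg, by omega, hpack⟩
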